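/- arXiv:2304.00469 — 2 statements merged into one kernel-verified Lean document; each statement's English description precedes it below -/
import Mathlib

section
/- Let β ∈ ℂ satisfy β² − 2β − 1 = 0 and set (c₀, …, c₈) = (1, 1, 1, 1, β, 1−β, 1−β, β−2, −1), c₉ = β−2, c₁₀ = β, c₁₁ = 1−β, c₁₂ = 1. Define the linear map L : ℂ⁶ → ℂ⁶ sending (θ₀, …, θ₅) to (θ₉, θ₁₂, θ₁₀, θ₂, θ₁₃, θ₁₁), where θ₆ = (c₆θ₅ − c₄θ₀)/c₉, θ₇ = −(c₇θ₅ + c₂θ₀)/c₉, θ₈ = (c₃θ₄ + c₀θ₃)/c₁₀, θ₉ = (−c₄θ₄ + c₁θ₃)/c₁₀, θ₁₀ = (c₀θ₁ − c₆θ₅ + c₄θ₀)/c₁₁, θ₁₁ = −(c₃c₉θ₁ − c₂c₆θ₅ + c₂c₄θ₀)/(c₁₁c₉), θ₁₂ = (c₆c₇θ₅ + c₂c₆θ₀ − c₃c₉θ₄ − c₀c₉θ₃)/(c₁₂c₉), θ₁₃ = (c₁₀c₇θ₅ + c₁₀c₂θ₀ − c₁c₃θ₄ − c₀c₁θ₃)/(c₁₀c₁₂).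 Then the 6×6 matrix of L satisfies det(t·I₆ − L) = t⁶ − 2t⁵ + t⁴ + t² − 2t + 1 for all t ∈ ℂ. -/
set_option maxHeartbeats 4000000 in
theorem m036_aux (β : ℂ) (hβ : β ^ 2 - 2 * β - 1 = 0) (t : ℂ) :
    (!![t, 0, 0, 2 - β, 1, 0;
       β + 1, t, 0, 1, 1, β - 1;
       (β + 1) / 2, (β - 1) / 2, t, 0, 0, 1;
       0, 0, -1, t, 0, 0;
       -1, 0, 0, β - 2, t + β - 2, 2 - β;
       -(3 * β + 1) / 2, (1 - β) / 2, 0, 0, 0, t - β] : Matrix (Fin 6) (Fin 6) ℂ).det =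
      t ^ 6 - 2 * t ^ 5 + t ^ 4 + t ^ 2 - 2 * t + 1 := by
  simp [Matrix.det_succ_row_zero, Fin.sum_univ_succ, Fin.succAbove]
  have h2 : β ^ 2 = 2 * β + 1 := by linear_combination hβ
  have h3 : β ^ 3 = 5 * β + 2 := by linear_combination (β + 2) * hβ
  have h4 : β ^ 4 = 12 * β + 5 := by linear_combination (β ^ 2 + 2 * β + 5) * hβ
  have h5 : β ^ 5 = 29 * β + 12 := by
    linear_combination (β ^ 3 + 2 * β ^ 2 + 5 * β + 12) * hβ
  ring_nf
  simp only [h2, h3, h4, h5]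
  ring

set_option maxHeartbeats 1000000 in
/-- The C²-torsion polynomial of m036 (trivial boundary obstruction class):
`det(t·I − L) = t⁶ − 2t⁵ + t⁴ + t² − 2t + 1` for the linear map `L` sending the
face variables on the bottom surface to those on the top surface. -/
theorem m036_C2_torsion_trivial_class (β : ℂ) (hβ : β ^ 2 - 2 * β - 1 = 0)
    (L : (Fin 6 → ℂ) →ₗ[ℂ] (Fin 6 → ℂ))
    (hL : ∀ θ : Fin 6 → ℂ,
      let c0 : ℂ := 1; let c1 : ℂ := 1; let c2 : ℂ := 1; let c3 : ℂ := 1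
      let c4 : ℂ := β; let c5 : ℂ := 1 - β; let c6 : ℂ := 1 - β
      let c7 : ℂ := β - 2; let c8 : ℂ := -1
      let c9 : ℂ := β - 2; let c10 : ℂ := β; let c11 : ℂ := 1 - β; let c12 : ℂ := 1
      let θ6 : ℂ := (c6 * θ 5 - c4 * θ 0) / c9
      let θ7 : ℂ := -((c7 * θ 5 + c2 * θ 0) / c9)
      let θ8 : ℂ := (c3 * θ 4 + c0 * θ 3) / c10
      let θ9 : ℂ := (-(c4 * θ 4) + c1 * θ 3) / c10
      let θ10 : ℂ := (c0 * θ 1 - c6 * θ 5 + c4 * θ 0) / c11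
      let θ11 : ℂ := -((c3 * c9 * θ 1 - c2 * c6 * θ 5 + c2 * c4 * θ 0) / (c11 * c9))
      let θ12 : ℂ := (c6 * c7 * θ 5 + c2 * c6 * θ 0 - c3 * c9 * θ 4 - c0 * c9 * θ 3) / (c12 * c9)
      let θ13 : ℂ := (c10 * c7 * θ 5 + c10 * c2 * θ 0 - c1 * c3 * θ 4 - c0 * c1 * θ 3) / (c10 * c12)
      L θ = ![θ9, θ12, θ10, θ 2, θ13, θ11]) :
    ∀ t : ℂ,
      (t • (1 : Matrix (Fin 6) (Fin 6) ℂ) - LinearMap.toMatrix' L).det =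
        t ^ 6 - 2 * t ^ 5 + t ^ 4 + t ^ 2 - 2 * t + 1 := by
  intro t
  have hb : β ≠ 0 := by rintro rfl; norm_num at hβ
  have hb2 : β - 2 ≠ 0 := by
    intro h
    have h2 : β = 2 := by linear_combination h
    rw [h2] at hβ; norm_num at hβ
  have hb1 : 1 - β ≠ 0 := by
    intro h
    have h2 : β = 1 := by linear_combination -h
    rw [h2] at hβ; norm_num at hβ
  have i10 : β⁻¹ = β - 2 := by
    apply inv_eq_of_mul_eq_one_right; linear_combination hβ
  have i9 : (β - 2)⁻¹ = β := by rw [← i10, inv_inv]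
  have i11 : (1 - β)⁻¹ = (1 - β) / 2 := by
    apply inv_eq_of_mul_eq_one_right; linear_combination hβ / 2
  have hM : LinearMap.toMatrix' L =
      !![0, 0, 0, β - 2, -1, 0;
         -β - 1, 0, 0, -1, -1, 1 - β;
         -(β + 1) / 2, (1 - β) / 2, 0, 0, 0, -1;
         0, 0, 1, 0, 0, 0;
         1, 0, 0, 2 - β, 2 - β, β - 2;
         (3 * β + 1) / 2, -(1 - β) / 2, 0, 0, 0, β] := by
    ext i j
    rw [LinearMap.toMatrix'_apply, hL]
    simp only [div_eq_mul_inv, mul_inv, i9, i10, i11, inv_one]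
    fin_cases i <;> fin_cases j <;> simp <;> grind
  rw [hM, ← m036_aux β hβ t]
  congr 1
  ext i j
  fin_cases i <;> fin_cases j <;> simp [Matrix.one_apply] <;> ring
end

section
/- Define, on the open set of (c₀, …, c₈) ∈ ℂ⁹ where c₄, c₅, c₇, c₈ are all nonzero, the functions C₉ = (−c₂c₆ + c₄c₇)/c₈, C₁₀ = (−c₁c₃ + c₀c₄)/c₅, C₁₁ = (−c₂c₃c₆ + c₃c₄c₇ + c₀c₂c₈)/(c₇c₈), C₁₂ = (c₀c₄(−c₂c₆ + c₄c₇) + c₁(c₂c₃c₆ − c₃c₄c₇ − c₅c₆c₈))/(c₄c₅c₈), and the map F : (c₀, …, c₈) ↦ (c₁, c₂, c₃, C₁₂, C₁₀, c₆, C₁₁, C₉, −c₀). Let α ∈ ℂ satisfy α³ + α² + α − 1 = 0 and let p = (1, 1, 1, 1, α, −α−α², −α−α², −α, −1). Then F is differentiable at p, and the 9×9 Jacobian matrix J of F at p (with entries J_{ij} = ∂F_i/∂c_j evaluated at p) satisfies det(t·I₉ − J) = t⁹ + (2α²+4α+2)t⁸ + (4α²+6α+6)t⁷ + (6α²+4α+8)t⁶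 + (−2α²+4α+3)t⁵ + (2α²−4α−3)t⁴ − (6α²+4α+8)t³ − (4α²+6α+6)t² − (2α²+4α+2)t − 1 for all t ∈ ℂ. -/
set_option linter.unusedSimpArgs false
set_option maxRecDepth 10000

/-- The Jacobian matrix at the Ptolemy solution. -/
noncomputable def m036Jac (a : ℂ) : Matrix (Fin 9) (Fin 9) ℂ :=
  !![0, 1, 0, 0, 0, 0, 0, 0, 0;
    0, 0, 1, 0, 0, 0, 0, 0, 0;
    0, 0, 0, 1, 0, 0, 0, 0, 0;
    (1/2+1/2*a^2), (1/2-1/2*a^2), (-a-a^2), (-1/2-a-1/2*a^2), (-1/2+a-1/2*a^2), (-1/2-1/2*a^2), (-a-a^2), (-a), (-a);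
    (-1/2-1/2*a^2), (1/2+a+1/2*a^2), 0, (1/2+a+1/2*a^2), (-1/2-a-1/2*a^2), (1/2+1/2*a^2), 0, 0, 0;
    0, 0, 0, 0, 0, 0, 1, 0, 0;
    (-1-a-a^2), 0, (-a^2), 1, (-1), 0, (-1-a-a^2), (-a), 1;
    0, 0, (-a-a^2), 0, a, 0, 1, (-a), (-a);
    -1, 0, 0, 0, 0, 0, 0, 0, 0]

theorem m036_quot {N D : (Fin 9 → ℂ) → ℂ} {N' D' L : (Fin 9 → ℂ) →L[ℂ] ℂ} {p : Fin 9 → ℂ} (q r : ℂ)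
    (hN : HasFDerivAt N N' p) (hD : HasFDerivAt D D' p) (hq : D p * q = 1) (hr : N p * q = r)
    (hL : ∀ v, L v = q * (N' v - r * D' v)) :
    HasFDerivAt (fun c => N c / D c) L p := by
  have h0 : D p ≠ 0 := left_ne_zero_of_mul_eq_one hq
  have hq' : q = (D p)⁻¹ := eq_inv_of_mul_eq_one_right hq
  have hi := (hasDerivAt_inv h0).comp_hasFDerivAt p hD
  have := hN.mul hi
  simp only [div_eq_mul_inv]
  refine this.congr_fderiv ?_
  ext1 v
  rw [hL, ← hr, hq']
  simp
  field_simp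
  ring

theorem m036_core (t x0 x1 x2 x3 x4 x5 x6 x7 x8 y0 y1 y2 y3 y4 y5 y6 y7 y8 z0 z1 z2 z3 z4 z5 z6 z7 z8 w0 w1 w2 w3 w4 w5 w6 w7 w8 : ℂ) :
    Matrix.det !![0, 1, 0, 0, 0, 0, 0, 0, 0;
        0, t, -1, 0, 0, 0, 0, 0, 0;
        0, 0, t, -1, 0, 0, 0, 0, 0;
        0, 0, 0, t, 0, -1, 0, 0, 0;
        0, 0, 0, 0, 0, 0, 0, -1, 0;
        x0, x1, x2, x3, x4, x5, x6, x7, x8;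
        y0, y1, y2, y3, y4, y5, y6, y7, y8;
        z0, z1, z2, z3, z4, z5, z6, z7, z8;
        w0, w1, w2, w3, w4, w5, w6, w7, w8] =
    Matrix.det !![x0, x4, x6, x8;
        y0, y4, y6, y8;
        z0, z4, z6, z8;
        w0, w4, w6, w8] := by
  rw [Matrix.det_succ_row_zero, Finset.sum_eq_single (1 : Fin 9) (by
    intro b _ hb
    fin_cases b <;> simp at hb ⊢) (by simp)]
  rw [Matrix.det_succ_row_zero, Finset.sum_eq_single (1 : Fin 8) (by
    intro b _ hb
    fin_cases b <;> simp [Fin.succAbove] at hb ⊢) (by simp)]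
  rw [Matrix.det_succ_row_zero, Finset.sum_eq_single (1 : Fin 7) (by
    intro b _ hb
    fin_cases b <;> simp [Fin.succAbove] at hb ⊢) (by simp)]
  rw [Matrix.det_succ_row_zero, Finset.sum_eq_single (2 : Fin 6) (by
    intro b _ hb
    fin_cases b <;> simp [Fin.succAbove] at hb ⊢) (by simp)]
  rw [Matrix.det_succ_row_zero, Finset.sum_eq_single (3 : Fin 5) (by
    intro b _ hb
    fin_cases b <;> simp [Fin.succAbove] at hb ⊢) (by simp)]
  simp [Fin.succAbove]
  rw [show (-1 : ℂ) ^ 3 = -1 by norm_num, neg_one_mul, neg_neg]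
  congr 1
  ext i j
  fin_cases i <;> fin_cases j <;> rfl

theorem m036_det4 (x0 x1 x2 x3 y0 y1 y2 y3 z0 z1 z2 z3 w0 w1 w2 w3 : ℂ) :
    Matrix.det !![x0, x1, x2, x3; y0, y1, y2, y3; z0, z1, z2, z3; w0, w1, w2, w3] =
      x0 * y1 * z2 * w3 - x0 * y1 * z3 * w2 - x0 * y2 * z1 * w3 + x0 * y2 * z3 * w1
      + x0 * y3 * z1 * w2 - x0 * y3 * z2 * w1 - x1 * y0 * z2 * w3 + x1 * y0 * z3 * w2
      + x1 * y2 * z0 * w3 - x1 * y2 * z3 * w0 - x1 * y3 * z0 * w2 + x1 * y3 * z2 * w0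
      + x2 * y0 * z1 * w3 - x2 * y0 * z3 * w1 - x2 * y1 * z0 * w3 + x2 * y1 * z3 * w0
      + x2 * y3 * z0 * w1 - x2 * y3 * z1 * w0 - x3 * y0 * z1 * w2 + x3 * y0 * z2 * w1
      + x3 * y1 * z0 * w2 - x3 * y1 * z2 * w0 - x3 * y2 * z0 * w1 + x3 * y2 * z1 * w0 := by
  simp [Matrix.det_succ_row_zero, Fin.sum_univ_succ, Fin.succAbove]
  ring

theorem m036_core' (t x0 x1 x2 x3 x4 x5 x6 x7 x8 y0 y1 y2 y3 y4 y5 y6 y7 y8 z0 z1 z2 z3 z4 z5 z6 z7 z8 w0 w1 w2 w3 w4 w5 w6 w7 w8 : ℂ) :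
    Matrix.det !![t, 1, 0, 0, 0, 0, 0, 0, 0;
        0, t, -1, 0, 0, 0, 0, 0, 0;
        0, 0, t, -1, 0, 0, 0, 0, 0;
        0, 0, 0, t, 0, -1, 0, 0, 0;
        0, 0, 0, 0, t, 0, 0, -1, 0;
        x0, x1, x2, x3, x4, x5, x6, x7, x8;
        y0, y1, y2, y3, y4, y5, y6, y7, y8;
        z0, z1, z2, z3, z4, z5, z6, z7, z8;
        w0, w1, w2, w3, w4, w5, w6, w7, w8] =
    Matrix.det !![x0 - t * x1 - t ^ 2 * x2 - t ^ 3 * x3 - t ^ 4 * x5, x4 + t * x7, x6, x8;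
        y0 - t * y1 - t ^ 2 * y2 - t ^ 3 * y3 - t ^ 4 * y5, y4 + t * y7, y6, y8;
        z0 - t * z1 - t ^ 2 * z2 - t ^ 3 * z3 - t ^ 4 * z5, z4 + t * z7, z6, z8;
        w0 - t * w1 - t ^ 2 * w2 - t ^ 3 * w3 - t ^ 4 * w5, w4 + t * w7, w6, w8] := by
  -- column operations: add multiples of later columns to columns 0 and 4
  let U : Matrix (Fin 9) (Fin 9) ℂ :=
    !![1, 0, 0, 0, 0, 0, 0, 0, 0;
       -t, 1, 0, 0, 0, 0, 0, 0, 0;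
       -t ^ 2, 0, 1, 0, 0, 0, 0, 0, 0;
       -t ^ 3, 0, 0, 1, 0, 0, 0, 0, 0;
       0, 0, 0, 0, 1, 0, 0, 0, 0;
       -t ^ 4, 0, 0, 0, 0, 1, 0, 0, 0;
       0, 0, 0, 0, 0, 0, 1, 0, 0;
       0, 0, 0, 0, t, 0, 0, 1, 0;
       0, 0, 0, 0, 0, 0, 0, 0, 1]
  have hU : U.det = 1 := by
    rw [Matrix.det_of_isLowerTriangular]
    · simp [U, Fin.prod_univ_succ]
    · intro i j hij
      change i < j at hij
      fin_cases i <;> fin_cases j <;> first | rfl | (exfalso; revert hij; decide)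
  have hdet : ∀ B : Matrix (Fin 9) (Fin 9) ℂ, B.det = (B * U).det := by
    intro B
    rw [Matrix.det_mul, hU, mul_one]
  have hMU : ∀ B : Matrix (Fin 9) (Fin 9) ℂ, B * U = Matrix.of fun i =>
      ![B i 0 - t * B i 1 - t ^ 2 * B i 2 - t ^ 3 * B i 3 - t ^ 4 * B i 5, B i 1, B i 2, B i 3,
        B i 4 + t * B i 7, B i 5, B i 6, B i 7, B i 8] := by
    intro B
    ext i j
    fin_cases j <;> simp [U, Matrix.mul_apply, Fin.sum_univ_succ] <;> ring
  rw [hdet, hMU, ← m036_core t (x0 - t * x1 - t ^ 2 * x2 - t ^ 3 * x3 - t ^ 4 * x5) x1 x2 x3 (x4 + t * x7) x5 x6 x7 x8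
    (y0 - t * y1 - t ^ 2 * y2 - t ^ 3 * y3 - t ^ 4 * y5) y1 y2 y3 (y4 + t * y7) y5 y6 y7 y8
    (z0 - t * z1 - t ^ 2 * z2 - t ^ 3 * z3 - t ^ 4 * z5) z1 z2 z3 (z4 + t * z7) z5 z6 z7 z8
    (w0 - t * w1 - t ^ 2 * w2 - t ^ 3 * w3 - t ^ 4 * w5) w1 w2 w3 (w4 + t * w7) w5 w6 w7 w8]
  congr 1
  ext i j
  fin_cases i <;> fin_cases j <;> first | rfl | (simp; done) | (simp; ring)

set_option maxHeartbeats 4000000 in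
theorem m036_det (a t : ℂ) (ha : a ^ 3 + a ^ 2 + a - 1 = 0) :
    (t • (1 : Matrix (Fin 9) (Fin 9) ℂ) - m036Jac a).det =
          t ^ 9 + (2 * a ^ 2 + 4 * a + 2) * t ^ 8 + (4 * a ^ 2 + 6 * a + 6) * t ^ 7
            + (6 * a ^ 2 + 4 * a + 8) * t ^ 6 + (-(2 * a ^ 2) + 4 * a + 3) * t ^ 5
            + (2 * a ^ 2 - 4 * a - 3) * t ^ 4 - (6 * a ^ 2 + 4 * a + 8) * t ^ 3
            - (4 * a ^ 2 + 6 * a + 6) * t ^ 2 - (2 * a ^ 2 + 4 * a + 2) * t - 1 := by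
  let e : Fin 9 ≃ Fin 9 := ⟨![8, 0, 1, 2, 5, 3, 4, 6, 7], ![1, 2, 3, 5, 6, 4, 7, 8, 0],
    by decide, by decide⟩
  rw [← Matrix.det_submatrix_equiv_self e]
  have hM : (t • (1 : Matrix (Fin 9) (Fin 9) ℂ) - m036Jac a).submatrix e e =
      !![t, 1, 0, 0, 0, 0, 0, 0, 0;
        0, t, -1, 0, 0, 0, 0, 0, 0;
        0, 0, t, -1, 0, 0, 0, 0, 0;
        0, 0, 0, t, 0, -1, 0, 0, 0;
        0, 0, 0, 0, t, 0, 0, -1, 0;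
        -(-a), -(1/2+1/2*a^2), -(1/2-1/2*a^2), -(-a-a^2), -(-1/2-1/2*a^2), t - (-1/2-a-1/2*a^2), -(-1/2+a-1/2*a^2), -(-a-a^2), -(-a);
        0, -(-1/2-1/2*a^2), -(1/2+a+1/2*a^2), 0, -(1/2+1/2*a^2), -(1/2+a+1/2*a^2), t - (-1/2-a-1/2*a^2), 0, 0;
        -1, -(-1-a-a^2), 0, -(-a^2), 0, -1, -(-1), t - (-1-a-a^2), -(-a);
        -(-a), 0, 0, -(-a-a^2), 0, 0, -a, -1, t - (-a)] := by
    ext i j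
    fin_cases i <;> fin_cases j <;> simp [e, m036Jac, Matrix.one_apply]
  rw [hM]
  rw [m036_core', m036_det4]
  clear hM e
  linear_combination
    ((0 - 1 - 1 / 2 * a ^ 1 - 1 / 2 * a ^ 2 - 1 / 2 * a ^ 3) * t ^ 0 +
      (0 - 3 / 2 - 7 / 2 * a ^ 1 - 5 / 2 * a ^ 2 - 1 * a ^ 3 - 1 / 2 * a ^ 4) * t ^ 1 +
      (0 - 5 - 13 / 2 * a ^ 1 - 9 / 2 * a ^ 2 - 2 * a ^ 3 - 1 * a ^ 4) * t ^ 2 +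
      (0 - 13 / 2 - 7 / 2 * a ^ 1 - 4 * a ^ 2 + 1 / 2 * a ^ 4) * t ^ 3 +
      (0 - 2 - 2 * a ^ 1 + 7 / 2 * a ^ 2 + 1 / 2 * a ^ 3) * t ^ 4 +
      (0 + 7 / 2 + 13 / 2 * a ^ 1 + 2 * a ^ 2 + 1 * a ^ 3 + 1 / 2 * a ^ 4) * t ^ 5 +
      (0 + 7 + 9 / 2 * a ^ 1 + 5 / 2 * a ^ 2 + 1 / 2 * a ^ 3) * t ^ 6 +
      (0 + 9 / 2 + 3 / 2 * a ^ 1) * t ^ 7) * ha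

/-- The C³-torsion polynomial of m036 at the sign-deformed Ptolemy solution
(boundary obstruction class covering lifts of the geometric representation). -/
theorem m036_C3_torsion_geometric_class (α : ℂ) (hα : α ^ 3 + α ^ 2 + α - 1 = 0) :
    let C9 : (Fin 9 → ℂ) → ℂ := fun c => (-(c 2 * c 6) + c 4 * c 7) / c 8
    let C10 : (Fin 9 → ℂ) → ℂ := fun c => (-(c 1 * c 3) + c 0 * c 4) / c 5
    let C11 : (Fin 9 → ℂ) → ℂ := fun c =>
      (-(c 2 * c 3 * c 6) + c 3 * c 4 * c 7 + c 0 * c 2 * c 8) / (c 7 * c 8)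
    let C12 : (Fin 9 → ℂ) → ℂ := fun c =>
      (c 0 * c 4 * (-(c 2 * c 6) + c 4 * c 7)
          + c 1 * (c 2 * c 3 * c 6 - c 3 * c 4 * c 7 - c 5 * c 6 * c 8)) / (c 4 * c 5 * c 8)
    let F : (Fin 9 → ℂ) → (Fin 9 → ℂ) := fun c =>
      ![c 1, c 2, c 3, C12 c, C10 c, c 6, C11 c, C9 c, -c 0]
    let p : Fin 9 → ℂ := ![1, 1, 1, 1, α, -α - α ^ 2, -α - α ^ 2, -α, -1]
    DifferentiableAt ℂ F p ∧
      ∀ t : ℂ,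
        (t • (1 : Matrix (Fin 9) (Fin 9) ℂ) -
            LinearMap.toMatrix' (fderiv ℂ F p).toLinearMap).det =
          t ^ 9 + (2 * α ^ 2 + 4 * α + 2) * t ^ 8 + (4 * α ^ 2 + 6 * α + 6) * t ^ 7
            + (6 * α ^ 2 + 4 * α + 8) * t ^ 6 + (-(2 * α ^ 2) + 4 * α + 3) * t ^ 5
            + (2 * α ^ 2 - 4 * α - 3) * t ^ 4 - (6 * α ^ 2 + 4 * α + 8) * t ^ 3
            - (4 * α ^ 2 + 6 * α + 6) * t ^ 2 - (2 * α ^ 2 + 4 * α + 2) * t - 1 := by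
  intro C9 C10 C11 C12 F p
  have hp : ∀ k : Fin 9, HasFDerivAt (fun c : Fin 9 → ℂ => c k)
      (ContinuousLinearMap.proj (R := ℂ) (φ := fun _ : Fin 9 => ℂ) k) p :=
    fun k => (ContinuousLinearMap.proj (R := ℂ) (φ := fun _ : Fin 9 => ℂ) k).hasFDerivAt
  have p0 : p 0 = 1 := rfl
  have p1 : p 1 = 1 := rfl
  have p2 : p 2 = 1 := rfl
  have p3 : p 3 = 1 := rfl
  have p4 : p 4 = α := rfl
  have p5 : p 5 = -α - α ^ 2 := rfl
  have p6 : p 6 = -α - α ^ 2 := rfl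
  have p7 : p 7 = -α := rfl
  have p8 : p 8 = -1 := rfl
  have hF : HasFDerivAt F (LinearMap.toContinuousLinearMap (Matrix.toLin' (m036Jac α))) p := by
    rw [hasFDerivAt_pi']
    intro i
    fin_cases i
    · refine (hp 1).congr_fderiv ?_
      ext1 v
      simp [m036Jac, dotProduct, Fin.sum_univ_succ]
    · refine (hp 2).congr_fderiv ?_
      ext1 v
      simp [m036Jac, dotProduct, Fin.sum_univ_succ]
    · refine (hp 3).congr_fderiv ?_
      ext1 v
      simp [m036Jac, dotProduct, Fin.sum_univ_succ]
    · refine m036_quot (3 / 2 + α + α ^ 2 / 2) 1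
        ((((hp 0).mul (hp 4)).mul ((((hp 2).mul (hp 6)).neg).add ((hp 4).mul (hp 7)))).add
          ((hp 1).mul (((((hp 2).mul (hp 3)).mul (hp 6)).sub (((hp 3).mul (hp 4)).mul (hp 7))).sub
            (((hp 5).mul (hp 6)).mul (hp 8))))) (((hp 4).mul (hp 5)).mul (hp 8)) ?_ ?_ ?_
      · simp [p4, p5, p8]
        grind
      · simp [p0, p1, p2, p3, p4, p5, p6, p7, p8]
        try grind
      · intro v
        simp [m036Jac, dotProduct, Fin.sum_univ_succ, p0, p1, p2, p3, p4, p5, p6, p7, p8]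
        grind
    · refine m036_quot (-(1 / 2 + α + α ^ 2 / 2)) α
        ((((hp 1).mul (hp 3)).neg).add ((hp 0).mul (hp 4))) (hp 5) ?_ ?_ ?_
      · simp [p5]
        grind
      · simp [p0, p1, p2, p3, p4, p5, p6, p7, p8]
        try grind
      · intro v
        simp [m036Jac, dotProduct, Fin.sum_univ_succ, p0, p1, p2, p3, p4, p5, p6, p7, p8]
        grind
    · refine (hp 6).congr_fderiv ?_
      ext1 v
      simp [m036Jac, dotProduct, Fin.sum_univ_succ]
    · refine m036_quot (1 + α + α ^ 2) (-α - α ^ 2)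
        ((((((hp 2).mul (hp 3)).mul (hp 6)).neg).add (((hp 3).mul (hp 4)).mul (hp 7))).add
          (((hp 0).mul (hp 2)).mul (hp 8))) ((hp 7).mul (hp 8)) ?_ ?_ ?_
      · simp [p7, p8]
        grind
      · simp [p0, p1, p2, p3, p4, p5, p6, p7, p8]
        try grind
      · intro v
        simp [m036Jac, dotProduct, Fin.sum_univ_succ, p0, p1, p2, p3, p4, p5, p6, p7, p8]
        grind
    · refine m036_quot (-1) (-α)
        ((((hp 2).mul (hp 6)).neg).add ((hp 4).mul (hp 7))) (hp 8) ?_ ?_ ?_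
      · simp [p8]
      · simp [p0, p1, p2, p3, p4, p5, p6, p7, p8]
        try grind
      · intro v
        simp [m036Jac, dotProduct, Fin.sum_univ_succ, p0, p1, p2, p3, p4, p5, p6, p7, p8]
        grind
    · refine (hp 0).neg.congr_fderiv ?_
      ext1 v
      simp [m036Jac, dotProduct, Fin.sum_univ_succ]
  refine ⟨hF.differentiableAt, fun t => ?_⟩
  rw [hF.fderiv]
  have hm : LinearMap.toMatrix' (LinearMap.toContinuousLinearMap
      (Matrix.toLin' (m036Jac α))).toLinearMap = m036Jac α := by
    rw [LinearMap.coe_toContinuousLinearMap, LinearMap.toMatrix'_toLin']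
  rw [hm]
  exact m036_det α t hα
end
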